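/- arXiv:1401.6992 — 7 statements merged into one kernel-verified Lean document; each statement's English description precedes it below -/
import Mathlib

section
/- Let d ≥ 2 and let E, F ⊆ F_q^d be nonempty sets with (0,…,0) ∉ E. Then for any nontrivial additive character ψ of F_q, the dot product set satisfies |Π(E,F)| ≥ |E|²|F|² / ( q^{−1}|E|²|F|² + q^{2d−1}|E| 𝔅(E,F) ). -/
/-!
Let `ν(t)` be the number of pairs `(x, y) ∈ E × F` with `x · y = t`. Cauchy–Schwarz over the
support of `ν` gives `|E|²|F|² ≤ |Π(E,F)| ∑ ν(t)²`, and Plancherel on `K` turns `q ∑ ν(t)²` into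
`∑ₛ |∑_{x ∈ E, y ∈ F} ψ(-s x·y)|²` (`card_sq_mul_le`). The term `s = 0` equals `|E|²|F|²`. For
`s ≠ 0` the inner sum over `y` is `q^d F̂(sx)`, so Cauchy–Schwarz over `x ∈ E` bounds the term by
`q^{2d} |E| ∑_{x ∈ E} |F̂(sx)|²`. Since `0 ∉ E`, the pairs `(s, x)` with `s ≠ 0`, `x ∈ E` and
`sx = z` correspond to the points of `E ∩ l_z`, so summing over `s ≠ 0` produces exactly `𝔅(E,F)`
(`sum_dilates_eq_Bquant`).
-/

open Finset

noncomputable section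

/-- dot product on `Fin d → K` -/
def fqDot {K : Type} [Field K] {d : ℕ} (x y : Fin d → K) : K := ∑ i, x i * y i

/-- dot product set Π(E,F) -/
def dotSet {K : Type} [Field K] [DecidableEq K] {d : ℕ}
    (E F : Finset (Fin d → K)) : Finset K :=
  (E ×ˢ F).image fun p => fqDot p.1 p.2

/-- punctured line through the origin and x -/
def lineThrough {K : Type} [Field K] [Fintype K] [DecidableEq K] {d : ℕ}
    (x : Fin d → K) : Finset (Fin d → K) :=
  univ.filter fun y => ∃ s : K, s ≠ 0 ∧ y = s • x

/-- Fourier transform of the indicator of F -/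
def ftransform {K : Type} [Field K] [Fintype K] {d : ℕ}
    (ψ : AddChar K ℂ) (F : Finset (Fin d → K)) (m : Fin d → K) : ℂ :=
  ((Fintype.card K : ℂ) ^ d)⁻¹ * ∑ x ∈ F, ψ (-(fqDot x m))

/-- the quantity 𝔅(E,F) -/
def Bquant {K : Type} [Field K] [Fintype K] [DecidableEq K] {d : ℕ}
    (ψ : AddChar K ℂ) (E F : Finset (Fin d → K)) : ℝ :=
  ∑ x ∈ univ.filter (fun x : Fin d → K => x ≠ 0),
    ((E ∩ lineThrough x).card : ℝ) * ‖ftransform ψ F x‖ ^ 2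

/-- Plancherel on `K`, in the form of a count of coincidences of `f` on `S`. -/
lemma sum_norm_sq_eq {K ι : Type} [Field K] [Fintype K] [DecidableEq K]
    (ψ : AddChar K ℂ) (hψ : ∃ a : K, ψ a ≠ 1) (S : Finset ι) (f : ι → K) :
    ∑ s : K, ‖∑ p ∈ S, ψ (-(s * f p))‖ ^ 2
      = (Fintype.card K : ℝ) * ∑ p ∈ S, ∑ p' ∈ S, if f p = f p' then (1 : ℝ) else 0 := by
  have hprim : ψ.IsPrimitive := by
    apply AddChar.IsPrimitive.of_ne_one
    rintro rfl
    obtain ⟨a, ha⟩ := hψ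
    exact ha rfl
  have key : ∀ s : K, ((‖∑ p ∈ S, ψ (-(s * f p))‖ ^ 2 : ℝ) : ℂ)
      = ∑ p ∈ S, ∑ p' ∈ S, ψ (s * (f p' - f p)) := by
    intro s
    push_cast
    rw [← Complex.mul_conj', map_sum, Finset.sum_mul_sum]
    refine sum_congr rfl fun p _ => sum_congr rfl fun p' _ => ?_
    rw [← AddChar.map_neg_eq_conj, ← AddChar.map_add_eq_mul]
    congr 1
    ring
  have : ((∑ s : K, ‖∑ p ∈ S, ψ (-(s * f p))‖ ^ 2 : ℝ) : ℂ)
      = (((Fintype.card K : ℝ) * ∑ p ∈ S, ∑ p' ∈ S, if f p = f p' then (1 : ℝ) else 0 : ℝ) : ℂ) := by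
    rw [Complex.ofReal_sum, sum_congr rfl fun s _ => key s, sum_comm]
    push_cast
    rw [mul_sum]
    refine sum_congr rfl fun p _ => ?_
    rw [sum_comm, mul_sum]
    refine sum_congr rfl fun p' _ => ?_
    rw [AddChar.sum_mulShift _ hprim]
    by_cases h : f p = f p'
    · simp [h]
    · simp [h, sub_eq_zero, Ne.symm h]
  exact_mod_cast this

lemma card_sq_mul_le {K ι : Type} [Field K] [Fintype K] [DecidableEq K]
    (ψ : AddChar K ℂ) (hψ : ∃ a : K, ψ a ≠ 1) (S : Finset ι) (f : ι → K) :
    (S.card : ℝ) ^ 2 * (Fintype.card K : ℝ)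
      ≤ ((S.image f).card : ℝ) * ∑ s : K, ‖∑ p ∈ S, ψ (-(s * f p))‖ ^ 2 := by
  rw [sum_norm_sq_eq ψ hψ]
  have h1 : (S.card : ℝ) = ∑ t ∈ S.image f, ((S.filter fun p => f p = t).card : ℝ) := by
    exact_mod_cast card_eq_sum_card_image f S
  have h2 : ∑ p ∈ S, ∑ p' ∈ S, (if f p = f p' then (1 : ℝ) else 0)
      = ∑ t ∈ S.image f, ((S.filter fun p => f p = t).card : ℝ) ^ 2 := by
    rw [← sum_fiberwise_of_maps_to (t := S.image f) (g := f) fun p hp => mem_image_of_mem f hp]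
    refine sum_congr rfl fun t _ => ?_
    rw [sum_congr rfl (g := fun _ => ((S.filter fun p => f p = t).card : ℝ))]
    · simp [sq]
    · intro p hp
      rw [(mem_filter.mp hp).2]
      simp [eq_comm]
  have h3 := sq_sum_le_card_mul_sum_sq (s := S.image f)
    (f := fun t => ((S.filter fun p => f p = t).card : ℝ))
  rw [← h1, ← h2] at h3
  have := mul_le_mul_of_nonneg_right h3 (Nat.cast_nonneg (α := ℝ) (Fintype.card K))
  linarith

lemma sum_dilates_eq_Bquant {K : Type} [Field K] [Fintype K] [DecidableEq K] {d : ℕ}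
    (ψ : AddChar K ℂ) (E F : Finset (Fin d → K)) (h0 : (0 : Fin d → K) ∉ E) :
    ∑ s ∈ univ.erase (0 : K), ∑ x ∈ E, ‖ftransform ψ F (s • x)‖ ^ 2 = Bquant ψ E F := by
  have hB : Bquant ψ E F = ∑ z ∈ univ.filter (fun z : Fin d → K => z ≠ 0),
      ∑ _x ∈ E ∩ lineThrough z, ‖ftransform ψ F z‖ ^ 2 := by
    simp [Bquant]
  rw [hB, ← sum_product', sum_sigma']
  refine sum_bij (fun p _ => ⟨p.1 • p.2, p.2⟩) ?_ ?_ ?_ ?_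
  · rintro ⟨s, x⟩ h
    simp only [mem_product, mem_erase, mem_univ, and_true] at h
    have hx : x ≠ 0 := fun hx => h0 (hx ▸ h.2)
    simp only [mem_sigma, mem_filter, mem_univ, true_and, mem_inter, lineThrough]
    refine ⟨smul_ne_zero h.1 hx, h.2, s⁻¹, inv_ne_zero h.1, ?_⟩
    rw [inv_smul_smul₀ h.1]
  · rintro ⟨s, x⟩ h ⟨s', x'⟩ h' heq
    simp only [mem_product, mem_erase, mem_univ, and_true] at h
    have hx : x ≠ 0 := fun hx => h0 (hx ▸ h.2)
    simp only [Sigma.mk.injEq, heq_eq_eq] at heq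
    obtain ⟨h1, rfl⟩ := heq
    rw [smul_left_injective K hx h1]
  · rintro ⟨z, x⟩ h
    simp only [mem_sigma, mem_filter, mem_univ, true_and, mem_inter, lineThrough] at h
    obtain ⟨hz, hxE, s, hs, rfl⟩ := h
    exact ⟨(s⁻¹, s • z), by simp [hs, hxE], by simp [inv_smul_smul₀ hs]⟩
  · intros
    rfl

/-- The exponential sum over `E × F` at frequency `s` is a sum of values of `F̂` on `s • E`. -/
lemma sum_char_eq {K : Type} [Field K] [Fintype K] {d : ℕ}
    (ψ : AddChar K ℂ) (E F : Finset (Fin d → K)) (s : K) :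
    ∑ p ∈ E ×ˢ F, ψ (-(s * fqDot p.1 p.2))
      = (Fintype.card K : ℂ) ^ d * ∑ x ∈ E, ftransform ψ F (s • x) := by
  have hq : (Fintype.card K : ℂ) ^ d ≠ 0 := pow_ne_zero _ (by simp)
  rw [sum_product, mul_sum]
  refine sum_congr rfl fun x _ => ?_
  rw [ftransform, mul_inv_cancel_left₀ hq]
  refine sum_congr rfl fun y _ => ?_
  congr 2
  simp only [fqDot, mul_sum, Pi.smul_apply, smul_eq_mul]
  exact sum_congr rfl fun i _ => by ring

lemma norm_sum_char_sq_le {K : Type} [Field K] [Fintype K] {d : ℕ}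
    (ψ : AddChar K ℂ) (E F : Finset (Fin d → K)) (s : K) :
    ‖∑ p ∈ E ×ˢ F, ψ (-(s * fqDot p.1 p.2))‖ ^ 2
      ≤ (Fintype.card K : ℝ) ^ (2 * d) * (E.card : ℝ)
        * ∑ x ∈ E, ‖ftransform ψ F (s • x)‖ ^ 2 := by
  rw [sum_char_eq, norm_mul, mul_pow, norm_pow, Complex.norm_natCast, ← pow_mul, mul_comm d 2,
    mul_assoc]
  gcongr
  calc ‖∑ x ∈ E, ftransform ψ F (s • x)‖ ^ 2
      ≤ (∑ x ∈ E, ‖ftransform ψ F (s • x)‖) ^ 2 := by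
        gcongr
        exact norm_sum_le _ _
    _ ≤ _ := sq_sum_le_card_mul_sum_sq

/-- lower bound for the dot product set in terms of 𝔅(E,F). -/
theorem dotSet_card_lower_bound (d : ℕ) (hd : 2 ≤ d)
    (K : Type) [Field K] [Fintype K] [DecidableEq K]
    (hq : Odd (Fintype.card K))
    (ψ : AddChar K ℂ) (hψ : ∃ a : K, ψ a ≠ 1)
    (E F : Finset (Fin d → K)) (hE : E.Nonempty) (hF : F.Nonempty)
    (h0 : (0 : Fin d → K) ∉ E) :
    ((dotSet E F).card : ℝ) ≥
      ((E.card : ℝ) ^ 2 * (F.card : ℝ) ^ 2) /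
        (((E.card : ℝ) ^ 2 * (F.card : ℝ) ^ 2) / (Fintype.card K : ℝ) +
          (Fintype.card K : ℝ) ^ (2 * d - 1) * (E.card : ℝ) * Bquant ψ E F) := by
  have hq0 : (0 : ℝ) < Fintype.card K := by exact_mod_cast Fintype.card_pos
  have hB : 0 ≤ Bquant ψ E F := sum_nonneg fun _ _ => by positivity
  have hmain := card_sq_mul_le ψ hψ (E ×ˢ F) fun p => fqDot p.1 p.2
  have hsum : ∑ s : K, ‖∑ p ∈ E ×ˢ F, ψ (-(s * fqDot p.1 p.2))‖ ^ 2
      ≤ (E.card : ℝ) ^ 2 * (F.card : ℝ) ^ 2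
        + (Fintype.card K : ℝ) ^ (2 * d) * (E.card : ℝ) * Bquant ψ E F := by
    rw [← add_sum_erase univ _ (mem_univ (0 : K)), ← sum_dilates_eq_Bquant ψ E F h0, mul_sum]
    refine add_le_add (le_of_eq ?_) (sum_le_sum fun s _ => norm_sum_char_sq_le ψ E F s)
    simp [card_product, mul_pow]
  have hpow : (Fintype.card K : ℝ) ^ (2 * d)
      = (Fintype.card K : ℝ) * (Fintype.card K : ℝ) ^ (2 * d - 1) := by
    rw [← pow_succ']
    congr 1
    omega
  refine div_le_of_le_mul₀ (by positivity) (by positivity) ?_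
  refine le_of_mul_le_mul_right ?_ hq0
  rw [card_product, Nat.cast_mul, mul_pow] at hmain
  refine (hmain.trans (mul_le_mul_of_nonneg_left hsum (Nat.cast_nonneg _))).trans (le_of_eq ?_)
  rw [hpow, dotSet]
  field_simp
end
end

section
/- Let d ≥ 2 and E, F ⊆ F_q^d. Then for any nontrivial additive character ψ of F_q, Σ_{t∈F_q} ν(t)² ≤ q^{−1}|E|²|F|² + q^{2d−1}|E| · Σ_{x∈F_q^d} Σ_{s∈F_q, s≠0} E(sx)|F̂(x)|², where E(·) denotes the indicator function of E. -/
/-!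
For `x ∈ E` let `n_x(t)` be the number of `y ∈ F` with `x · y = t`, so that `ν(t) = ∑_{x ∈ E} n_x(t)`.
Cauchy–Schwarz over `x ∈ E` gives `ν(t)² ≤ |E| ∑_{x ∈ E} n_x(t)²`. By Plancherel on `K`
(`sum_fiber_sq`), `∑_t n_x(t)² = q⁻¹ ∑_s |∑_{y ∈ F} ψ(-s (x · y))|²`; the term `s = 0` is
`q⁻¹ |F|²`, and the terms `s ≠ 0` are `q^{2d-1} |F̂(s x)|²` (`sum_fiber_sq_dot`). Summing over
`x ∈ E` and replacing `x` by `s⁻¹ x` (`sum_smul_swap`) yields the bound.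
-/

open Finset

noncomputable section

/-- counting function ν(t) = #{(x,y) ∈ E × F : x·y = t} -/
def nuCount {K : Type} [Field K] [DecidableEq K] {d : ℕ}
    (E F : Finset (Fin d → K)) (t : K) : ℕ :=
  ((E ×ˢ F).filter fun p => fqDot p.1 p.2 = t).card

/-- Plancherel on `K` for the function counting the points of the fibres of `f : α → K` over a
finite set: both sides count, with weight `q`, the pairs with equal image under `f`. -/
theorem sum_fiber_sq {K : Type} [Field K] [Fintype K] [DecidableEq K]
    (ψ : AddChar K ℂ) (hψ : ∃ a : K, ψ a ≠ 1) {α : Type} (F : Finset α) (f : α → K) :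
    (Fintype.card K : ℝ) * ∑ t : K, ((F.filter fun y => f y = t).card : ℝ) ^ 2 =
      ∑ s : K, ‖∑ y ∈ F, ψ (-(s * f y))‖ ^ 2 := by
  have hprim : ψ.IsPrimitive := by
    apply AddChar.IsPrimitive.of_ne_one
    rintro rfl
    obtain ⟨a, ha⟩ := hψ
    exact ha rfl
  have hR : ∀ s : K, ((‖∑ y ∈ F, ψ (-(s * f y))‖ : ℂ)) ^ 2 =
      ∑ y ∈ F, ∑ z ∈ F, ψ (s * (f y - f z)) := by
    intro s
    rw [← Complex.conj_mul', map_sum, Finset.sum_mul_sum]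
    refine Finset.sum_congr rfl fun y _ => Finset.sum_congr rfl fun z _ => ?_
    rw [← AddChar.map_neg_eq_conj, ← AddChar.map_add_eq_mul]
    congr 1
    ring
  have hL : ∀ t : K, ((F.filter fun y => f y = t).card : ℂ) ^ 2 =
      ∑ y ∈ F, ∑ z ∈ F, if f y = t then (if f z = t then (1 : ℂ) else 0) else 0 := by
    intro t
    rw [Finset.card_filter, sq]
    push_cast
    rw [Finset.sum_mul_sum]
    refine Finset.sum_congr rfl fun y _ => Finset.sum_congr rfl fun z _ => ?_
    split_ifs <;> simp
  apply Complex.ofReal_injective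
  push_cast
  simp_rw [hR, hL]
  have hcomm : ∀ g : K → α → α → ℂ, ∑ s, ∑ y ∈ F, ∑ z ∈ F, g s y z =
      ∑ y ∈ F, ∑ z ∈ F, ∑ s, g s y z := by
    intro g
    rw [Finset.sum_comm]
    exact Finset.sum_congr rfl fun y _ => Finset.sum_comm
  rw [hcomm, hcomm, Finset.mul_sum]
  refine Finset.sum_congr rfl fun y _ => ?_
  rw [Finset.mul_sum]
  refine Finset.sum_congr rfl fun z _ => ?_
  rw [AddChar.sum_mulShift _ hprim]
  simp [sub_eq_zero, eq_comm]

/-- The case `f y = x · y` of `sum_fiber_sq`, with the frequency `0` separated and the others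
written through the Fourier transform of `F`. -/
theorem sum_fiber_sq_dot {K : Type} [Field K] [Fintype K] [DecidableEq K] {d : ℕ}
    (ψ : AddChar K ℂ) (hψ : ∃ a : K, ψ a ≠ 1) (F : Finset (Fin d → K)) (x : Fin d → K) :
    (Fintype.card K : ℝ) * ∑ t : K, ((F.filter fun y => fqDot x y = t).card : ℝ) ^ 2 =
      (F.card : ℝ) ^ 2 + (Fintype.card K : ℝ) ^ (2 * d) *
        ∑ s ∈ univ.filter (fun s : K => s ≠ 0), ‖ftransform ψ F (s • x)‖ ^ 2 := by
  have hq0 : (Fintype.card K : ℝ) ≠ 0 := by simp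
  have hterm : ∀ s : K, ‖∑ y ∈ F, ψ (-(s * fqDot x y))‖ ^ 2 =
      (Fintype.card K : ℝ) ^ (2 * d) * ‖ftransform ψ F (s • x)‖ ^ 2 := by
    intro s
    have hdot : ∀ y : Fin d → K, fqDot y (s • x) = s * fqDot x y := by
      intro y
      simp only [fqDot, Finset.mul_sum, Pi.smul_apply, smul_eq_mul]
      exact Finset.sum_congr rfl fun i _ => by ring
    simp only [ftransform, hdot, norm_mul, norm_inv, norm_pow, Complex.norm_natCast]
    field_simp
    ring
  rw [sum_fiber_sq ψ hψ, ← Finset.add_sum_erase _ _ (mem_univ (0 : K)), Finset.mul_sum,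
    ← Finset.filter_ne' univ (0 : K)]
  congr 1
  · simp
  · exact Finset.sum_congr rfl fun s _ => hterm s

/-- The change of variables `x ↦ s⁻¹ x` for each `s ≠ 0`. -/
theorem sum_smul_swap {K : Type} [Field K] [Fintype K] [DecidableEq K] {d : ℕ}
    (E : Finset (Fin d → K)) (g : (Fin d → K) → ℝ) :
    ∑ x ∈ E, ∑ s ∈ univ.filter (fun s : K => s ≠ 0), g (s • x) =
      ∑ x : Fin d → K, ∑ s ∈ univ.filter (fun s : K => s ≠ 0),
        (if s • x ∈ E then (1 : ℝ) else 0) * g x := by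
  have h1 : ∑ x : Fin d → K, ∑ s ∈ univ.filter (fun s : K => s ≠ 0),
        (if s • x ∈ E then (1 : ℝ) else 0) * g x =
      ∑ x : Fin d → K, ∑ s ∈ univ.filter (fun s : K => s ≠ 0),
        (if s⁻¹ • x ∈ E then (1 : ℝ) else 0) * g x := by
    refine Finset.sum_congr rfl fun x _ => ?_
    refine Finset.sum_nbij' (fun s => s⁻¹) (fun s => s⁻¹) ?_ ?_ ?_ ?_ ?_ <;> simp
  rw [h1, Finset.sum_comm, Finset.sum_comm (s := univ)]
  refine Finset.sum_congr rfl fun s hs => ?_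
  have hs0 : s ≠ 0 := by simpa using hs
  rw [← Equiv.sum_comp (MulAction.toPerm (Units.mk0 s hs0) : Equiv.Perm (Fin d → K))]
  simp [Units.smul_def, smul_smul, hs0]


/-- second-moment bound for the counting function ν. -/
theorem nu_second_moment (d : ℕ) (hd : 2 ≤ d)
    (K : Type) [Field K] [Fintype K] [DecidableEq K]
    (hq : Odd (Fintype.card K))
    (ψ : AddChar K ℂ) (hψ : ∃ a : K, ψ a ≠ 1)
    (E F : Finset (Fin d → K)) :
    ∑ t : K, (nuCount E F t : ℝ) ^ 2 ≤
      ((E.card : ℝ) ^ 2 * (F.card : ℝ) ^ 2) / (Fintype.card K : ℝ) +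
        (Fintype.card K : ℝ) ^ (2 * d - 1) * (E.card : ℝ) *
          ∑ x : Fin d → K, ∑ s ∈ univ.filter (fun s : K => s ≠ 0),
            (if s • x ∈ E then (1 : ℝ) else 0) * ‖ftransform ψ F x‖ ^ 2 := by
  have hq0 : (0 : ℝ) < Fintype.card K := by exact_mod_cast Fintype.card_pos
  have hnu : ∀ t : K, (nuCount E F t : ℝ) =
      ∑ x ∈ E, ((F.filter fun y => fqDot x y = t).card : ℝ) := by
    intro t
    simp only [nuCount, Finset.card_filter, Finset.sum_product]
    push_cast
    rfl
  have hpow : (Fintype.card K : ℝ) ^ (2 * d) =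
      (Fintype.card K : ℝ) * (Fintype.card K : ℝ) ^ (2 * d - 1) := by
    rw [← pow_succ']
    congr 1
    omega
  have hx : ∀ x : Fin d → K, ∑ t : K, ((F.filter fun y => fqDot x y = t).card : ℝ) ^ 2 =
      (F.card : ℝ) ^ 2 / (Fintype.card K : ℝ) + (Fintype.card K : ℝ) ^ (2 * d - 1) *
        ∑ s ∈ univ.filter (fun s : K => s ≠ 0), ‖ftransform ψ F (s • x)‖ ^ 2 := by
    intro x
    have h := sum_fiber_sq_dot ψ hψ F x
    rw [hpow] at h
    apply mul_left_cancel₀ hq0.ne'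
    rw [h, mul_add, mul_div_cancel₀ _ hq0.ne', mul_assoc]
  calc ∑ t : K, (nuCount E F t : ℝ) ^ 2
      ≤ ∑ t : K, (E.card : ℝ) * ∑ x ∈ E, ((F.filter fun y => fqDot x y = t).card : ℝ) ^ 2 := by
        refine Finset.sum_le_sum fun t _ => ?_
        rw [hnu t]
        exact sq_sum_le_card_mul_sum_sq
    _ = (E.card : ℝ) * ∑ x ∈ E, ((F.card : ℝ) ^ 2 / (Fintype.card K : ℝ) +
          (Fintype.card K : ℝ) ^ (2 * d - 1) *
            ∑ s ∈ univ.filter (fun s : K => s ≠ 0), ‖ftransform ψ F (s • x)‖ ^ 2) := by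
        rw [← Finset.mul_sum, Finset.sum_comm]
        simp_rw [hx]
    _ = _ := by
        rw [Finset.sum_add_distrib, ← Finset.mul_sum,
          sum_smul_swap E fun x => ‖ftransform ψ F x‖ ^ 2, Finset.sum_const, nsmul_eq_mul]
        ring
end
end

section
/- Let d ≥ 2, 0 ≤ β ≤ 1, and A ≥ 1. There exist constants C > 1 and 0 < c < 1, depending only on d and A, such that for every odd prime power q and all E, F ⊆ F_q^d satisfying |E ∩ l_x| ≤ A q^β for all x ∈ F_q^d \ {0} and |E||F| ≥ C q^{d+β}, one has |Π(E,F)| ≥ c q. -/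
/-!
The proof is an elementary second-moment argument. Write `q = |K|` and, for a direction `x`,
let `f_x(t)` be the number of `y ∈ F` with `x · y = t` and `M(x) = ∑ t, f_x(t) ^ 2`.
The excess `V(x) = M(x) - |F|² / q` is nonnegative by Cauchy–Schwarz and is invariant under
nonzero scaling of `x`. Two facts are combined.

* Counting solutions of `z · (y - y') = 0` gives `∑ z, V(z) = |F| q^d (q - 1) / q` exactly
  (`sum_excess`).
* Averaging the scaling invariance over all nonzero scalars gives
  `(q - 1) ∑_{x ∈ E} V(x) = ∑ z, #{s ≠ 0 : s z ∈ E} V(z)`, and the weight is at most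
  `|E ∩ l_z| ≤ A q^β` when `0 ∉ E` (`sum_excess_le`).

Hence `∑_{x ∈ E} M(x) ≤ |E| |F|² / q + A q^β |F| q^d / q`. Two applications of Cauchy–Schwarz give
`(|E| |F|)² ≤ |Π(E,F)| |E| ∑_{x ∈ E} M(x)`, and the size hypothesis makes the first term on the
right dominant. The origin is discarded from `E` at the cost of a factor `2`.
-/

open Finset

noncomputable section

lemma fqDot_smul {K : Type} [Field K] {d : ℕ} (s : K) (x y : Fin d → K) :
    fqDot (s • x) y = s * fqDot x y := by
  simp [fqDot, Finset.mul_sum, mul_assoc]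

section SecondMoment

variable {K : Type} [Field K] [Fintype K] [DecidableEq K] {d : ℕ}

/-- The number of `y ∈ F` with `x · y = t`, as a real number. -/
def fiberCount (F : Finset (Fin d → K)) (x : Fin d → K) (t : K) : ℝ :=
  ((F.filter fun y => fqDot x y = t).card : ℝ)

/-- The second moment `M(x) = ∑ t, f_x(t) ^ 2` of the fibre counts in the direction `x`. -/
def secondMoment (F : Finset (Fin d → K)) (x : Fin d → K) : ℝ :=
  ∑ t, fiberCount F x t ^ 2

/-- The excess `V(x) = M(x) - |F|² / q` of the second moment over its equidistributed value. -/
def excess (F : Finset (Fin d → K)) (x : Fin d → K) : ℝ :=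
  secondMoment F x - (F.card : ℝ) ^ 2 / (Fintype.card K : ℝ)

lemma sum_fiberCount (F : Finset (Fin d → K)) (x : Fin d → K) :
    ∑ t, fiberCount F x t = F.card := by
  unfold fiberCount
  rw [← Nat.cast_sum]
  congr 1
  exact (Finset.card_eq_sum_card_fiberwise (fun _ _ => Finset.mem_coe.2 (Finset.mem_univ _))).symm

lemma excess_nonneg (F : Finset (Fin d → K)) (x : Fin d → K) : 0 ≤ excess F x := by
  have h := sq_sum_le_card_mul_sum_sq (s := (univ : Finset K)) (f := fiberCount F x)
  rw [sum_fiberCount, Finset.card_univ] at h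
  have hq : (0 : ℝ) < Fintype.card K := by exact_mod_cast Fintype.card_pos
  rw [excess, sub_nonneg, div_le_iff₀ hq, mul_comm]
  exact h

lemma excess_smul (F : Finset (Fin d → K)) (s : Kˣ) (x : Fin d → K) :
    excess F (s • x) = excess F x := by
  unfold excess secondMoment
  congr 1
  rw [← Equiv.sum_comp (MulAction.toPerm s)]
  refine Finset.sum_congr rfl fun t _ => ?_
  congr 1
  unfold fiberCount
  congr 2
  ext y
  simp [Units.smul_def, fqDot_smul]

lemma secondMoment_eq (F : Finset (Fin d → K)) (x : Fin d → K) :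
    secondMoment F x = ∑ y ∈ F, ∑ y' ∈ F, if fqDot x y = fqDot x y' then (1 : ℝ) else 0 := by
  unfold secondMoment fiberCount
  simp_rw [Finset.card_filter, Nat.cast_sum, sq, Finset.sum_mul_sum]
  rw [Finset.sum_comm]
  refine Finset.sum_congr rfl fun y _ => ?_
  rw [Finset.sum_comm]
  refine Finset.sum_congr rfl fun y' _ => ?_
  rw [Finset.sum_eq_single (fqDot x y)]
  · simp [eq_comm]
  · intro b _ hb
    simp [hb.symm]
  · simp

/-- A hyperplane through the origin contains a proportion `1 / q` of the space: all fibres of the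
surjective functional `z ↦ z · u` have the same size. -/
lemma card_hyperplane (u : Fin d → K) (hu : u ≠ 0) :
    Fintype.card K * (univ.filter fun z : Fin d → K => fqDot z u = 0).card
      = Fintype.card K ^ d := by
  let φ : (Fin d → K) →+ K :=
    { toFun := fun z => fqDot z u
      map_zero' := by simp [fqDot]
      map_add' := fun a b => by simp [fqDot, add_mul, Finset.sum_add_distrib] }
  have hsurj : ∀ t, t ∈ Set.range φ := by
    obtain ⟨i, hi⟩ := Function.ne_iff.1 hu
    intro t
    refine ⟨Pi.single i (t * (u i)⁻¹), ?_⟩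
    change fqDot _ u = t
    have hi' : u i ≠ 0 := hi
    simp [fqDot, Pi.single_apply, hi']
  have h := Finset.card_eq_sum_card_fiberwise (s := (univ : Finset (Fin d → K)))
    (t := (univ : Finset K)) (f := φ) (fun _ _ => Finset.mem_coe.2 (Finset.mem_univ _))
  have h2 : ∀ t ∈ (univ : Finset K), (univ.filter fun z => φ z = t).card
      = (univ.filter fun z => φ z = 0).card := fun t _ =>
    AddMonoidHom.card_fiber_eq_of_mem_range φ (hsurj t) (hsurj 0)
  rw [Finset.sum_congr rfl h2, Finset.sum_const, smul_eq_mul, Finset.card_univ,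
    Finset.card_univ] at h
  rw [Fintype.card_fun, Fintype.card_fin] at h
  exact h.symm

lemma card_dot_eq (y y' : Fin d → K) (h : y ≠ y') :
    (∑ z : Fin d → K, if fqDot z y = fqDot z y' then (1 : ℝ) else 0)
      = (Fintype.card K : ℝ) ^ d / Fintype.card K := by
  have hq : (0 : ℝ) < Fintype.card K := by exact_mod_cast Fintype.card_pos
  have h1 := card_hyperplane (y - y') (sub_ne_zero.2 h)
  rw [eq_div_iff hq.ne', Finset.sum_boole, mul_comm]
  have h2 : (univ.filter fun z : Fin d → K => fqDot z y = fqDot z y')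
      = univ.filter fun z : Fin d → K => fqDot z (y - y') = 0 := by
    ext z
    rw [Finset.mem_filter_univ, Finset.mem_filter_univ]
    simp [fqDot, mul_sub, sub_eq_zero]
  rw [h2]
  exact_mod_cast h1

lemma sum_excess (F : Finset (Fin d → K)) :
    ∑ z, excess F z
      = F.card * (Fintype.card K : ℝ) ^ d * (Fintype.card K - 1) / Fintype.card K := by
  have hq : (0 : ℝ) < Fintype.card K := by exact_mod_cast Fintype.card_pos
  have hM : ∑ z, secondMoment F z = F.card * ((Fintype.card K : ℝ) ^ d
      + (F.card - 1) * ((Fintype.card K : ℝ) ^ d / Fintype.card K)) := by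
    simp_rw [secondMoment_eq]
    rw [Finset.sum_comm, ← nsmul_eq_mul]
    refine Finset.sum_eq_card_nsmul fun y hy => ?_
    rw [Finset.sum_comm, ← Finset.add_sum_erase _ _ hy]
    congr 1
    · simp
    · rw [Finset.sum_congr rfl fun y' hy' => card_dot_eq y y' (Finset.ne_of_mem_erase hy').symm,
        Finset.sum_const, nsmul_eq_mul, Finset.cast_card_erase_of_mem hy]
  simp only [excess]
  rw [Finset.sum_sub_distrib, hM, Finset.sum_const, Finset.card_univ, nsmul_eq_mul,
    Fintype.card_fun, Fintype.card_fin]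
  push_cast
  field_simp
  ring

lemma card_units_le (E : Finset (Fin d → K)) (z : Fin d → K) (hz : z ≠ 0) :
    (univ.filter fun s : Kˣ => s • z ∈ E).card ≤ (E ∩ lineThrough z).card := by
  refine Finset.card_le_card_of_injOn (fun s => s • z) ?_ ?_
  · intro s hs
    have hs' : s • z ∈ E := by simpa using hs
    simp only [Finset.coe_inter, Set.mem_inter_iff, Finset.mem_coe]
    exact ⟨hs', by simpa [lineThrough] using ⟨(s : K), s.ne_zero, rfl⟩⟩
  · intro s _ t _ hst
    exact Units.ext (smul_left_injective K hz hst)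

/-- The line bound turns the average of the excess over the whole space into a bound for its sum
over `E`, by replacing each `V(x)` with its average over the nonzero multiples of `x`. -/
lemma sum_excess_le (E F : Finset (Fin d → K)) (h0 : (0 : Fin d → K) ∉ E) (B : ℝ) (hB : 0 ≤ B)
    (hE : ∀ x : Fin d → K, x ≠ 0 → ((E ∩ lineThrough x).card : ℝ) ≤ B) :
    ∑ x ∈ E, excess F x ≤ B * (F.card * (Fintype.card K : ℝ) ^ d / Fintype.card K) := by
  have hq1 : (0 : ℝ) < (Fintype.card K : ℝ) - 1 := by
    have : (1 : ℝ) < Fintype.card K := by exact_mod_cast Fintype.one_lt_card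
    linarith
  have hU : (Fintype.card Kˣ : ℝ) = (Fintype.card K : ℝ) - 1 := by
    rw [Fintype.card_units, Nat.cast_sub Fintype.card_pos, Nat.cast_one]
  have hswap : ((Fintype.card K : ℝ) - 1) * ∑ x ∈ E, excess F x
      = ∑ z, ((univ.filter fun s : Kˣ => s • z ∈ E).card : ℝ) * excess F z := by
    have hs : ∀ s : Kˣ, ∑ x ∈ E, excess F x
        = ∑ z, if s • z ∈ E then excess F z else 0 := by
      intro s
      have h := Equiv.sum_comp (MulAction.toPerm s : Equiv.Perm (Fin d → K))
        (fun x => if x ∈ E then excess F x else 0)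
      simp only [MulAction.toPerm_apply, excess_smul] at h
      rw [h, Finset.sum_ite_mem, Finset.univ_inter]
    calc ((Fintype.card K : ℝ) - 1) * ∑ x ∈ E, excess F x
        = ∑ _s : Kˣ, ∑ x ∈ E, excess F x := by
          rw [Finset.sum_const, Finset.card_univ, nsmul_eq_mul, hU]
      _ = ∑ s : Kˣ, ∑ z, if s • z ∈ E then excess F z else 0 :=
          Finset.sum_congr rfl fun s _ => hs s
      _ = _ := by
          rw [Finset.sum_comm]
          refine Finset.sum_congr rfl fun z _ => ?_
          rw [← Finset.sum_filter, Finset.sum_const, nsmul_eq_mul]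
  have hle : ∑ z, ((univ.filter fun s : Kˣ => s • z ∈ E).card : ℝ) * excess F z
      ≤ ∑ z, B * excess F z := by
    refine Finset.sum_le_sum fun z _ => mul_le_mul_of_nonneg_right ?_ (excess_nonneg F z)
    by_cases hz : z = 0
    · simpa [hz, h0] using hB
    · exact le_trans (by exact_mod_cast card_units_le E z hz) (hE z hz)
  rw [← hswap, ← Finset.mul_sum, sum_excess] at hle
  refine le_of_mul_le_mul_left (hle.trans_eq ?_) hq1
  ring

/-- Cauchy–Schwarz, first over the values `t ∈ Π(E,F)` and then over `x ∈ E`. -/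
lemma sq_card_le (E F : Finset (Fin d → K)) :
    ((E.card : ℝ) * F.card) ^ 2
      ≤ (dotSet E F).card * (E.card * ∑ x ∈ E, secondMoment F x) := by
  have hsum : ∑ t ∈ dotSet E F, ∑ x ∈ E, fiberCount F x t = (E.card : ℝ) * F.card := by
    rw [Finset.sum_comm, ← nsmul_eq_mul]
    refine Finset.sum_eq_card_nsmul fun x hx => ?_
    rw [← sum_fiberCount F x]
    refine Finset.sum_subset (Finset.subset_univ _) fun t _ ht => ?_
    simp only [fiberCount, Nat.cast_eq_zero, Finset.card_eq_zero, Finset.filter_eq_empty_iff]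
    rintro y hy rfl
    exact ht (Finset.mem_image.2 ⟨(x, y), Finset.mem_product.2 ⟨hx, hy⟩, rfl⟩)
  rw [← hsum]
  refine sq_sum_le_card_mul_sum_sq.trans (mul_le_mul_of_nonneg_left ?_ (Nat.cast_nonneg _))
  calc ∑ t ∈ dotSet E F, (∑ x ∈ E, fiberCount F x t) ^ 2
      ≤ ∑ t ∈ dotSet E F, E.card * ∑ x ∈ E, fiberCount F x t ^ 2 :=
        Finset.sum_le_sum fun t _ => sq_sum_le_card_mul_sum_sq
    _ ≤ ∑ t, E.card * ∑ x ∈ E, fiberCount F x t ^ 2 :=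
        Finset.sum_le_sum_of_subset_of_nonneg (Finset.subset_univ _) fun t _ _ => by positivity
    _ = E.card * ∑ x ∈ E, secondMoment F x := by
        rw [← Finset.mul_sum, Finset.sum_comm]
        rfl

/-- The case `0 ∉ E`, with an arbitrary bound `B` on the line intersections. -/
lemma half_card_le (E F : Finset (Fin d → K)) (h0 : (0 : Fin d → K) ∉ E) (B : ℝ) (hB : 0 < B)
    (hE : ∀ x : Fin d → K, x ≠ 0 → ((E ∩ lineThrough x).card : ℝ) ≤ B)
    (hEF : B * (Fintype.card K : ℝ) ^ d ≤ (E.card : ℝ) * F.card) :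
    (1 / 2 : ℝ) * Fintype.card K ≤ (dotSet E F).card := by
  have hq : (0 : ℝ) < Fintype.card K := by exact_mod_cast Fintype.card_pos
  have hV := sum_excess_le E F h0 B hB.le hE
  simp only [excess] at hV
  rw [Finset.sum_sub_distrib, Finset.sum_const, nsmul_eq_mul] at hV
  have hCS := sq_card_le E F
  have hpos : 0 < (E.card : ℝ) * F.card := lt_of_lt_of_le (by positivity) hEF
  set N : ℝ := (E.card : ℝ) * F.card with hN
  set q : ℝ := (Fintype.card K : ℝ)
  set P : ℝ := ((dotSet E F).card : ℝ)
  have hP : 0 ≤ P := Nat.cast_nonneg _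
  have hbound : (E.card : ℝ) * ∑ x ∈ E, secondMoment F x ≤ 2 * N ^ 2 / q := by
    have h1 : (E.card : ℝ) * ∑ x ∈ E, secondMoment F x
        ≤ E.card * (E.card * ((F.card : ℝ) ^ 2 / q) + B * (F.card * q ^ d / q)) :=
      mul_le_mul_of_nonneg_left (by linarith) (Nat.cast_nonneg _)
    have h2 : (E.card : ℝ) * (E.card * ((F.card : ℝ) ^ 2 / q) + B * (F.card * q ^ d / q))
        = (N ^ 2 + N * (B * q ^ d)) / q := by
      rw [hN]
      ring
    rw [h2] at h1
    refine h1.trans ?_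
    gcongr
    nlinarith
  have h3 : N ^ 2 ≤ P * (2 * N ^ 2 / q) := hCS.trans (mul_le_mul_of_nonneg_left hbound hP)
  have h4 : P * (2 * N ^ 2 / q) = N ^ 2 * (2 * P / q) := by ring
  rw [h4] at h3
  have h5 : 1 ≤ 2 * P / q := by
    have hN2 : 0 < N ^ 2 := by positivity
    exact le_of_mul_le_mul_left (by linarith) hN2
  rw [le_div_iff₀ hq] at h5
  linarith

end SecondMoment

/-- if every punctured line through the origin meets E in ≤ A q^β points and
|E||F| ≥ C q^{d+β}, then |Π(E,F)| ≥ cq. -/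
theorem dotSet_card_of_line_bound (d : ℕ) (hd : 2 ≤ d) (A : ℝ) (hA : 1 ≤ A) :
    ∃ C : ℝ, 1 < C ∧ ∃ c : ℝ, 0 < c ∧ c < 1 ∧
      ∀ β : ℝ, 0 ≤ β → β ≤ 1 →
      ∀ (K : Type) [Field K] [Fintype K] [DecidableEq K],
        Odd (Fintype.card K) →
        ∀ E F : Finset (Fin d → K),
          (∀ x : Fin d → K, x ≠ 0 →
            ((E ∩ lineThrough x).card : ℝ) ≤ A * (Fintype.card K : ℝ) ^ β) →
          ((E.card : ℝ) * (F.card : ℝ) ≥ C * (Fintype.card K : ℝ) ^ ((d : ℝ) + β)) →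
          ((dotSet E F).card : ℝ) ≥ c * (Fintype.card K : ℝ) := by
  refine ⟨2 * A, by linarith, 1 / 2, by norm_num, by norm_num, ?_⟩
  intro β hβ _ K _ _ _ _ E F hE hEF
  have hq1 : (1 : ℝ) ≤ Fintype.card K := by exact_mod_cast Fintype.card_pos
  have hq : (0 : ℝ) < Fintype.card K := by linarith
  rw [Real.rpow_add hq, Real.rpow_natCast] at hEF
  have hqβ : 1 ≤ (Fintype.card K : ℝ) ^ β := Real.one_le_rpow hq1 hβ
  have hqd : 0 < (Fintype.card K : ℝ) ^ d := by positivity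
  have hAβ : 1 ≤ A * (Fintype.card K : ℝ) ^ β := one_le_mul_of_one_le_of_one_le hA hqβ
  have hF : (F.card : ℝ) ≤ (Fintype.card K : ℝ) ^ d := by
    have := Finset.card_le_univ F
    rw [Fintype.card_fun, Fintype.card_fin] at this
    exact_mod_cast this
  -- Since `|F| ≤ q ^ d`, the hypothesis forces `|E| ≥ 2`, so removing `0` at most halves `E`.
  have hE2 : (2 : ℝ) ≤ E.card := by
    refine le_of_mul_le_mul_right (a := (Fintype.card K : ℝ) ^ d) ?_ hqd
    have h1 : (E.card : ℝ) * F.card ≤ E.card * (Fintype.card K : ℝ) ^ d :=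
      mul_le_mul_of_nonneg_left hF (Nat.cast_nonneg _)
    nlinarith
  have hcard : (E.card : ℝ) ≤ 2 * (E.erase 0).card := by
    have h1 : (E.card : ℝ) ≤ (E.erase 0).card + 1 := by
      exact_mod_cast Nat.le_add_of_sub_le (Finset.pred_card_le_card_erase (s := E) (a := 0))
    linarith
  have hmain := half_card_le (E.erase 0) F (Finset.notMem_erase _ _)
    (A * (Fintype.card K : ℝ) ^ β) (by linarith)
    (fun x hx => le_trans (by
      exact_mod_cast Finset.card_le_card
        (Finset.inter_subset_inter_right (Finset.erase_subset _ _))) (hE x hx))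
    (by
      have h1 := mul_le_mul_of_nonneg_right hcard (Nat.cast_nonneg (α := ℝ) F.card)
      nlinarith)
  refine le_trans hmain ?_
  have hsub : dotSet (E.erase 0) F ⊆ dotSet E F :=
    Finset.image_subset_image (Finset.product_subset_product_left (Finset.erase_subset _ _))
  exact_mod_cast Finset.card_le_card hsub
end
end

section
/- Let d ≥ 2. There exist constants C > 1 and 0 < c < 1, depending only on d, such that for every odd prime power q and all E, F ⊆ F_q^d with |E||F| ≥ C q^{d+1}, one has |Π(E,F)| ≥ c q. -/
/-!
The proof is an elementary second-moment argument showing that every `t ≠ 0` lies in `Π(E,F)` as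
soon as `|E||F| > 3 q^{d+1}`; hence `|Π(E,F)| ≥ q - 1 ≥ q/2`, and `C = 4`, `c = 1/2` work.

Fix `t ≠ 0` and let `M(x)` be the number of `y ∈ F` with `x·y = t`. Each `y ≠ 0` satisfies
`x·y = t` for exactly `q^{d-1}` vectors `x`, and each pair `y ≠ y'` satisfies `x·y = x·y' = t` for
at most `q^{d-2}` vectors `x`. Expanding the square gives
`∑ₓ (q M(x) - |F|)² ≤ 3 |F| q^{d+1}` (`variance_bound`). If `t ∉ Π(E,F)`, then `M` vanishes on
`E`, so the left side is at least `|E||F|²`, forcing `|E||F| ≤ 3 q^{d+1}`.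

Both counts come from `card_fiber`: translating along a direction in which a functional is
nonconstant permutes its fibers transitively.
-/

open Finset

noncomputable section

lemma fqDot_add_smul {K : Type} [Field K] {d : ℕ} (x w y : Fin d → K) (s : K) :
    fqDot (x + s • w) y = fqDot x y + s * fqDot w y := by
  simp only [fqDot, Pi.add_apply, Pi.smul_apply, smul_eq_mul, Finset.mul_sum,
    ← Finset.sum_add_distrib]
  exact Finset.sum_congr rfl fun i _ => by ring

lemma fqDot_sub_right {K : Type} [Field K] {d : ℕ} (x y z : Fin d → K) :
    fqDot x (y - z) = fqDot x y - fqDot x z := by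
  simp only [fqDot, Pi.sub_apply, ← Finset.sum_sub_distrib]
  exact Finset.sum_congr rfl fun i _ => by ring

lemma exists_fqDot_ne_zero {K : Type} [Field K] {d : ℕ} {y : Fin d → K} (hy : y ≠ 0) :
    ∃ w, fqDot w y ≠ 0 := by
  obtain ⟨i, hi⟩ := Function.ne_iff.mp hy
  exact ⟨Pi.single i 1, by simpa [fqDot, Pi.single_apply] using hi⟩

/-- If `S` is invariant under translation along a direction `w` with `w·y ≠ 0`, then `x ↦ x·y` is
equidistributed on `S`. -/
lemma card_fiber {K : Type} [Field K] [Fintype K] [DecidableEq K] {d : ℕ}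
    (S : Finset (Fin d → K)) (w y : Fin d → K) (hw : fqDot w y ≠ 0)
    (hS : ∀ x ∈ S, ∀ s : K, x + s • w ∈ S) (t : K) :
    Fintype.card K * (S.filter fun x => fqDot x y = t).card = S.card := by
  have hle : ∀ a b : K, (S.filter fun x => fqDot x y = a).card ≤
      (S.filter fun x => fqDot x y = b).card := by
    intro a b
    refine Finset.card_le_card_of_injOn (fun x => x + ((b - a) / fqDot w y) • w) ?_ ?_
    · intro x hx
      simp only [Finset.coe_filter, Set.mem_ofPred_eq] at hx ⊢
      refine ⟨hS x hx.1 _, ?_⟩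
      rw [fqDot_add_smul, hx.2]
      field_simp
      ring
    · intro x _ x' _ h
      exact add_right_cancel h
  rw [Finset.card_eq_sum_card_fiberwise (s := S) (f := fun x => fqDot x y) (t := Finset.univ)
    (fun _ _ => Finset.mem_coe.mpr (Finset.mem_univ _)),
    Finset.sum_congr rfl fun b _ => le_antisymm (hle b t) (hle t b)]
  simp

lemma card_one {K : Type} [Field K] [Fintype K] [DecidableEq K] {d : ℕ}
    {y : Fin d → K} (hy : y ≠ 0) (t : K) :
    Fintype.card K * (univ.filter fun x : Fin d → K => fqDot x y = t).card
      = Fintype.card K ^ d := by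
  obtain ⟨w, hw⟩ := exists_fqDot_ne_zero hy
  rw [card_fiber univ w y hw (fun _ _ _ => Finset.mem_univ _) t]
  simp

/-- For `t ≠ 0` no linear independence of `y, y'` is needed: dependent pairs have no common
solution at all. -/
lemma card_two {K : Type} [Field K] [Fintype K] [DecidableEq K] {d : ℕ}
    {y y' : Fin d → K} (hy : y ≠ y') {t : K} (ht : t ≠ 0) :
    Fintype.card K ^ 2 *
      (univ.filter fun x : Fin d → K => fqDot x y = t ∧ fqDot x y' = t).card
      ≤ Fintype.card K ^ d := by
  rcases Finset.eq_empty_or_nonempty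
    (univ.filter fun x : Fin d → K => fqDot x y = t ∧ fqDot x y' = t) with h | ⟨w, hw⟩
  · simp [h]
  · simp only [Finset.mem_filter, Finset.mem_univ, true_and] at hw
    -- A common solution `w` is orthogonal to `y - y'` but not to `y`, so it is a direction along
    -- which the hyperplane orthogonal to `y - y'` is invariant.
    have hwz : fqDot w (y - y') = 0 := by rw [fqDot_sub_right, hw.1, hw.2, sub_self]
    have h1 := card_one (sub_ne_zero.mpr hy) (0 : K)
    have h2 := card_fiber (univ.filter fun x : Fin d → K => fqDot x (y - y') = 0) w y
      (by rw [hw.1]; exact ht)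
      (by
        intro x hx s
        simp only [Finset.mem_filter, Finset.mem_univ, true_and] at hx ⊢
        rw [fqDot_add_smul, hx, hwz]; ring) t
    have h3 : (univ.filter fun x : Fin d → K => fqDot x y = t ∧ fqDot x y' = t) =
        (univ.filter fun x : Fin d → K => fqDot x (y - y') = 0).filter
          fun x => fqDot x y = t := by
      ext x
      simp only [Finset.mem_filter, Finset.mem_univ, true_and, fqDot_sub_right, sub_eq_zero]
      constructor
      · rintro ⟨a, b⟩; exact ⟨a.trans b.symm, a⟩
      · rintro ⟨a, b⟩; exact ⟨b, a.symm.trans b⟩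
    rw [h3, pow_two, mul_assoc, h2, h1]

lemma variance_bound {K : Type} [Field K] [Fintype K] [DecidableEq K] {d : ℕ}
    (F : Finset (Fin d → K)) {t : K} (ht : t ≠ 0) :
    ∑ x : Fin d → K, ((Fintype.card K : ℝ) * ((F.filter fun y => fqDot x y = t).card : ℝ)
      - (F.card : ℝ)) ^ 2 ≤ 3 * (F.card : ℝ) * (Fintype.card K : ℝ) ^ (d + 1) := by
  set q : ℝ := (Fintype.card K : ℝ) with hq
  have hq1 : 1 ≤ q := by
    rw [hq]; exact_mod_cast Fintype.card_pos
  have hM : ∀ x : Fin d → K, ((F.filter fun y => fqDot x y = t).card : ℝ) =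
      ∑ y ∈ F, if fqDot x y = t then (1 : ℝ) else 0 := by
    intro x; simp
  have hfirst : q * ∑ x : Fin d → K, ((F.filter fun y => fqDot x y = t).card : ℝ) ≥
      ((F.card : ℝ) - 1) * q ^ d := by
    simp only [hM]
    rw [Finset.sum_comm, Finset.mul_sum]
    have hterm : ∀ y ∈ F.erase 0,
        q * ∑ x : Fin d → K, (if fqDot x y = t then (1 : ℝ) else 0) = q ^ d := by
      intro y hy
      have := card_one (Finset.ne_of_mem_erase hy) t
      rw [Finset.sum_boole, hq]
      exact_mod_cast this
    calc ((F.card : ℝ) - 1) * q ^ d ≤ ((F.erase 0).card : ℝ) * q ^ d := by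
          gcongr
          have : F.card - 1 ≤ (F.erase 0).card := Finset.pred_card_le_card_erase
          have : F.card ≤ (F.erase 0).card + 1 := by omega
          have : (F.card : ℝ) ≤ (F.erase 0).card + 1 := by exact_mod_cast this
          linarith
      _ = ∑ y ∈ F.erase 0, q * ∑ x : Fin d → K, (if fqDot x y = t then (1 : ℝ) else 0) := by
          rw [Finset.sum_congr rfl hterm]; simp
      _ ≤ _ := by
          refine Finset.sum_le_sum_of_subset_of_nonneg (Finset.erase_subset _ _) ?_
          intro y _ _
          positivity
  have hsecond : q ^ 2 * ∑ x : Fin d → K, ((F.filter fun y => fqDot x y = t).card : ℝ) ^ 2 ≤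
      (F.card : ℝ) * q ^ (d + 1) + (F.card : ℝ) ^ 2 * q ^ d := by
    have hexp : ∑ x : Fin d → K, ((F.filter fun y => fqDot x y = t).card : ℝ) ^ 2 =
        ∑ y ∈ F, ∑ y' ∈ F,
          ((univ.filter fun x : Fin d → K => fqDot x y = t ∧ fqDot x y' = t).card : ℝ) := by
      simp only [hM, pow_two, Finset.sum_mul_sum]
      rw [Finset.sum_comm]
      refine Finset.sum_congr rfl fun y _ => ?_
      rw [Finset.sum_comm]
      refine Finset.sum_congr rfl fun y' _ => ?_
      rw [← Finset.sum_boole]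
      refine Finset.sum_congr rfl fun x _ => ?_
      split_ifs <;> simp_all
    have hterm : ∀ y ∈ F, ∀ y' ∈ F, q ^ 2 *
        ((univ.filter fun x : Fin d → K => fqDot x y = t ∧ fqDot x y' = t).card : ℝ) ≤
        (if y = y' then q ^ (d + 1) else 0) + q ^ d := by
      intro y _ y' _
      by_cases h : y = y'
      · subst h
        simp only [and_self, if_true]
        by_cases h0 : y = 0
        · subst h0
          have : (univ.filter fun x : Fin d → K => fqDot x 0 = t) = ∅ := by
            simp [fqDot, ht.symm]
          rw [this]
          simp only [Finset.card_empty, Nat.cast_zero, mul_zero]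
          positivity
        · have h1 : q * ((univ.filter fun x : Fin d → K => fqDot x y = t).card : ℝ) = q ^ d := by
            rw [hq]; exact_mod_cast card_one h0 t
          rw [pow_two, mul_assoc, h1, pow_succ]
          have : 0 ≤ q ^ d := by positivity
          linarith [mul_comm q (q ^ d)]
      · rw [if_neg h, zero_add, hq]
        exact_mod_cast card_two h ht
    rw [hexp, Finset.mul_sum]
    simp only [Finset.mul_sum]
    refine (Finset.sum_le_sum fun y hy => Finset.sum_le_sum fun y' hy' =>
      hterm y hy y' hy').trans (le_of_eq ?_)
    simp only [Finset.sum_add_distrib, Finset.sum_ite_eq, Finset.sum_const, nsmul_eq_mul]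
    rw [Finset.sum_congr rfl fun y hy => if_pos hy]
    simp only [Finset.sum_const, nsmul_eq_mul]
    ring
  have hcard : ∑ _x : Fin d → K, (F.card : ℝ) ^ 2 = q ^ d * (F.card : ℝ) ^ 2 := by
    simp [hq]
  have hexpand : ∑ x : Fin d → K, (q * ((F.filter fun y => fqDot x y = t).card : ℝ)
      - (F.card : ℝ)) ^ 2 =
      q ^ 2 * ∑ x : Fin d → K, ((F.filter fun y => fqDot x y = t).card : ℝ) ^ 2
      - 2 * F.card * (q * ∑ x : Fin d → K, ((F.filter fun y => fqDot x y = t).card : ℝ))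
      + q ^ d * (F.card : ℝ) ^ 2 := by
    rw [← hcard]
    simp only [Finset.mul_sum, ← Finset.sum_sub_distrib, ← Finset.sum_add_distrib]
    exact Finset.sum_congr rfl fun x _ => by ring
  rw [hexpand]
  have hF0 : (0 : ℝ) ≤ F.card := by positivity
  have h1 := mul_le_mul_of_nonneg_left hfirst (by positivity : (0 : ℝ) ≤ 2 * F.card)
  have h2 : (F.card : ℝ) * q ^ d ≤ F.card * q ^ (d + 1) := by
    gcongr
    omega
  nlinarith

lemma mem_dotSet_of_large {K : Type} [Field K] [Fintype K] [DecidableEq K] {d : ℕ}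
    (E F : Finset (Fin d → K))
    (hEF : 3 * (Fintype.card K : ℝ) ^ (d + 1) < (E.card : ℝ) * (F.card : ℝ))
    {t : K} (ht : t ≠ 0) : t ∈ dotSet E F := by
  by_contra hmem
  have hM : ∀ x ∈ E, (F.filter fun y => fqDot x y = t) = ∅ := by
    intro x hx
    refine Finset.filter_eq_empty_iff.mpr fun y hy h => hmem ?_
    exact Finset.mem_image.mpr ⟨(x, y), Finset.mem_product.mpr ⟨hx, hy⟩, h⟩
  have hlow : (E.card : ℝ) * (F.card : ℝ) ^ 2 ≤
      ∑ x : Fin d → K, ((Fintype.card K : ℝ) * ((F.filter fun y => fqDot x y = t).card : ℝ)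
      - (F.card : ℝ)) ^ 2 := by
    refine le_trans (le_of_eq ?_) (Finset.sum_le_sum_of_subset_of_nonneg (Finset.subset_univ E)
      fun x _ _ => sq_nonneg _)
    rw [Finset.sum_congr rfl fun x hx => by rw [hM x hx]]
    simp
  have hup := hlow.trans (variance_bound F ht)
  have hq : (0 : ℝ) ≤ 3 * (Fintype.card K : ℝ) ^ (d + 1) := by positivity
  have hF : (0 : ℝ) < F.card := by
    rcases Nat.eq_zero_or_pos F.card with h | h
    · rw [h] at hEF; simp at hEF; linarith
    · exact_mod_cast h
  nlinarith [mul_lt_mul_of_pos_right hEF hF]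

/-- if |E||F| ≥ C q^{d+1}, then |Π(E,F)| ≥ cq. -/
theorem dotSet_card_general (d : ℕ) (hd : 2 ≤ d) :
    ∃ C : ℝ, 1 < C ∧ ∃ c : ℝ, 0 < c ∧ c < 1 ∧
      ∀ (K : Type) [Field K] [Fintype K] [DecidableEq K],
        Odd (Fintype.card K) →
        ∀ E F : Finset (Fin d → K),
          ((E.card : ℝ) * (F.card : ℝ) ≥ C * (Fintype.card K : ℝ) ^ (d + 1)) →
          ((dotSet E F).card : ℝ) ≥ c * (Fintype.card K : ℝ) := by
  refine ⟨4, by norm_num, 1 / 2, by norm_num, by norm_num, ?_⟩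
  intro K _ _ _ _ E F hEF
  have hq2 : 2 ≤ Fintype.card K := Fintype.one_lt_card
  have hqpos : (0 : ℝ) < (Fintype.card K : ℝ) ^ (d + 1) := by
    have : (0 : ℝ) < (Fintype.card K : ℝ) := by exact_mod_cast Fintype.card_pos
    positivity
  have hsub : (univ : Finset K).erase 0 ⊆ dotSet E F := fun t ht =>
    mem_dotSet_of_large E F (by linarith) (Finset.ne_of_mem_erase ht)
  have hcard := Finset.card_le_card hsub
  rw [Finset.card_erase_of_mem (Finset.mem_univ _), Finset.card_univ] at hcard
  have h2 : Fintype.card K ≤ 2 * (dotSet E F).card := by omega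
  have h3 : (Fintype.card K : ℝ) ≤ 2 * (dotSet E F).card := by exact_mod_cast h2
  linarith
end
end

section
/- Let d ≥ 2 and A ≥ 1. There exist constants C > 1 and 0 < c < 1, depending only on d and A, such that for every odd prime power q the following holds: if F ⊆ F_q^d is a Salem set with constant A satisfying |F| ≥ C q, and E ⊆ F_q^d contains at least one nonzero element, then |Π(E,F)| ≥ c q. -/
/-!
Fix a nonzero `x ∈ E` and let `N(t)` be the number of `y ∈ F` with `x · y = t`. Since
`∑ N(t) = |F|` and `N` is supported in `Π(E,F)`, Cauchy–Schwarz gives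
`|F|² ≤ |Π(E,F)| ∑ N(t)²`. Orthogonality of the characters `t ↦ ψ(st)` turns the second moment
into `q ∑ N(t)² = ∑_s |∑_{y ∈ F} ψ(-s x·y)|²` (`sum_norm_sq_charSum`). The term `s = 0` is `|F|²`;
for `s ≠ 0` the inner sum is `q^d F̂(s x)`, and the Salem bound makes its square at most `A²|F|`.
Hence `q |F|² ≤ |Π(E,F)| (|F|² + q A² |F|)`, so `|F| ≥ q` already yields
`|Π(E,F)| ≥ q / (1 + A²)`.
-/


open Finset

noncomputable section

/-- Plancherel for the distribution of `f` on `S`: the double sum on the right counts the pairs in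
`S` on which `f` agrees. -/
theorem sum_norm_sq_charSum {ι K : Type} [Field K] [Fintype K] [DecidableEq K]
    (ψ : AddChar K ℂ) (hψ : ∃ a : K, ψ a ≠ 1) (S : Finset ι) (f : ι → K) :
    ∑ s : K, ‖∑ y ∈ S, ψ (-(s * f y))‖ ^ 2 =
      (Fintype.card K : ℝ) * ∑ y ∈ S, ∑ z ∈ S, if f z = f y then (1 : ℝ) else 0 := by
  have hprim : ψ.IsPrimitive := AddChar.IsPrimitive.of_ne_one (by
    obtain ⟨a, ha⟩ := hψ
    rintro rfl
    exact ha rfl)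
  apply Complex.ofReal_injective
  push_cast
  have expand : ∀ s : K, ((‖∑ y ∈ S, ψ (-(s * f y))‖ : ℂ)) ^ 2 =
      ∑ y ∈ S, ∑ z ∈ S, ψ (s * (f z - f y)) := by
    intro s
    rw [← Complex.mul_conj', map_sum, Finset.sum_mul_sum]
    refine Finset.sum_congr rfl fun y _ => Finset.sum_congr rfl fun z _ => ?_
    rw [← AddChar.map_neg_eq_conj, ← AddChar.map_add_eq_mul]
    congr 1
    ring
  simp_rw [expand]
  rw [Finset.sum_comm, Finset.mul_sum]
  refine Finset.sum_congr rfl fun y _ => ?_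
  rw [Finset.sum_comm, Finset.mul_sum]
  refine Finset.sum_congr rfl fun z _ => ?_
  rw [AddChar.sum_mulShift _ hprim]
  by_cases h : f z = f y <;> simp [sub_eq_zero, h]

/-- Cauchy–Schwarz over the fibres of `f`. -/
theorem card_sq_le_card_mul_pairs {ι K : Type} [DecidableEq K]
    (S : Finset ι) (f : ι → K) (T : Finset K) (hT : ∀ y ∈ S, f y ∈ T) :
    (S.card : ℝ) ^ 2 ≤
      (T.card : ℝ) * ∑ y ∈ S, ∑ z ∈ S, if f z = f y then (1 : ℝ) else 0 := by
  have hcard : (S.card : ℝ) = ∑ t ∈ T, ((S.filter fun z => f z = t).card : ℝ) := by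
    exact_mod_cast Finset.card_eq_sum_card_fiberwise hT
  have hpairs : (∑ y ∈ S, ∑ z ∈ S, if f z = f y then (1 : ℝ) else 0) =
      ∑ t ∈ T, ((S.filter fun z => f z = t).card : ℝ) ^ 2 := by
    rw [← Finset.sum_fiberwise_of_maps_to hT]
    refine Finset.sum_congr rfl fun t _ => ?_
    rw [Finset.sum_congr rfl (g := fun _ => ((S.filter fun z => f z = t).card : ℝ))]
    · rw [Finset.sum_const, nsmul_eq_mul, sq]
    · intro y hy
      rw [(Finset.mem_filter.1 hy).2, Finset.sum_boole]
  rw [hpairs, hcard]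
  exact sq_sum_le_card_mul_sum_sq

theorem fqDot_smul_right {K : Type} [Field K] {d : ℕ} (s : K) (x y : Fin d → K) :
    fqDot y (s • x) = s * fqDot x y := by
  simp only [fqDot, Pi.smul_apply, smul_eq_mul, Finset.mul_sum]
  exact Finset.sum_congr rfl fun i _ => by ring

/-- if F is a Salem set with constant A, |F| ≥ Cq and E contains a nonzero
element, then |Π(E,F)| ≥ cq. -/
theorem dotSet_card_of_salem (d : ℕ) (hd : 2 ≤ d) (A : ℝ) (hA : 1 ≤ A) :
    ∃ C : ℝ, 1 < C ∧ ∃ c : ℝ, 0 < c ∧ c < 1 ∧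
      ∀ (K : Type) [Field K] [Fintype K] [DecidableEq K],
        Odd (Fintype.card K) →
        ∀ (ψ : AddChar K ℂ), (∃ a : K, ψ a ≠ 1) →
        ∀ E F : Finset (Fin d → K),
          (∀ m : Fin d → K, m ≠ 0 →
            ‖ftransform ψ F m‖ ≤ A * ((Fintype.card K : ℝ) ^ d)⁻¹ * Real.sqrt (F.card : ℝ)) →
          ((F.card : ℝ) ≥ C * (Fintype.card K : ℝ)) →
          (∃ x ∈ E, x ≠ 0) →
          ((dotSet E F).card : ℝ) ≥ c * (Fintype.card K : ℝ) := by
  have hA2 : 1 ≤ A ^ 2 := one_le_pow₀ hA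
  refine ⟨2, by norm_num, (1 + A ^ 2)⁻¹, by positivity, inv_lt_one_of_one_lt₀ (by linarith), ?_⟩
  intro K _ _ _ _ ψ hψ E F hSalem hF ⟨x, hxE, hx⟩
  have hq : (0 : ℝ) < Fintype.card K := by exact_mod_cast Fintype.card_pos
  set q : ℝ := (Fintype.card K : ℝ) with hqdef
  set n : ℝ := (F.card : ℝ) with hndef
  set P : ℝ := ((dotSet E F).card : ℝ) with hPdef
  have hn : 0 < n := by linarith
  have hP : 0 ≤ P := Nat.cast_nonneg _
  have hcs := card_sq_le_card_mul_pairs F (fun y => fqDot x y) (dotSet E F) fun y hy =>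
    Finset.mem_image.2 ⟨(x, y), Finset.mem_product.2 ⟨hxE, hy⟩, rfl⟩
  have hpl := sum_norm_sq_charSum ψ hψ F fun y => fqDot x y
  have hterm : ∀ s : K, s ≠ 0 → ‖∑ y ∈ F, ψ (-(s * fqDot x y))‖ ^ 2 ≤ A ^ 2 * n := by
    intro s hs
    have h := hSalem (s • x) (smul_ne_zero hs hx)
    simp only [ftransform, fqDot_smul_right, norm_mul, norm_inv, norm_pow,
      Complex.norm_natCast] at h
    have hqd : (0 : ℝ) < (q ^ d)⁻¹ := by positivity
    have h' : ‖∑ y ∈ F, ψ (-(s * fqDot x y))‖ ≤ A * Real.sqrt n := by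
      refine le_of_mul_le_mul_left (h.trans_eq ?_) hqd
      ring
    calc ‖∑ y ∈ F, ψ (-(s * fqDot x y))‖ ^ 2 ≤ (A * Real.sqrt n) ^ 2 := by gcongr
      _ = A ^ 2 * n := by rw [mul_pow, Real.sq_sqrt hn.le]
  have hbound : ∑ s : K, ‖∑ y ∈ F, ψ (-(s * fqDot x y))‖ ^ 2 ≤ n ^ 2 + q * (A ^ 2 * n) := by
    calc ∑ s : K, ‖∑ y ∈ F, ψ (-(s * fqDot x y))‖ ^ 2
        ≤ ∑ s : K, ((if s = 0 then n ^ 2 else 0) + A ^ 2 * n) := by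
          refine Finset.sum_le_sum fun s _ => ?_
          by_cases hs : s = 0
          · subst hs
            have : 0 ≤ A ^ 2 * n := by positivity
            simpa [← hndef] using this
          · simpa [hs] using hterm s hs
      _ = n ^ 2 + q * (A ^ 2 * n) := by
          simp [Finset.sum_add_distrib, ← hqdef]
  rw [hpl] at hbound
  have hmain : q * n ^ 2 ≤ P * (n ^ 2 + q * (A ^ 2 * n)) :=
    (mul_le_mul_of_nonneg_left hcs hq.le).trans
      ((mul_left_comm _ _ _).trans_le (mul_le_mul_of_nonneg_left hbound hP))
  have hqn : q * (A ^ 2 * n) ≤ n * (A ^ 2 * n) :=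
    mul_le_mul_of_nonneg_right (by linarith) (by positivity)
  have hfin : q * n ^ 2 ≤ (P * (1 + A ^ 2)) * n ^ 2 := by
    refine hmain.trans ((mul_le_mul_of_nonneg_left (add_le_add_right hqn _) hP).trans_eq ?_)
    ring
  have := le_of_mul_le_mul_right hfin (by positivity)
  rw [ge_iff_le, inv_mul_le_iff₀ (by positivity)]
  linarith
end
end

section
/- Let d ≥ 3. There exist constants C > 1 and 0 < c < 1, depending only on d, such that for every odd prime power q and all E, F ⊆ P with |E||F| ≥ C q^d, one has |Π(E,F)| ≥ c q. -/
/-!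
The second moment method, by elementary counting. For `A ⊆ K^m` and `x ∈ K^m` let
`M_A(x) = #{(y, y') ∈ A² : x·y = x·y'}` (`coll`) and `D_A(x) = q M_A(x) - |A|²` (`defect`).
Cauchy–Schwarz gives `|F|² ≤ |Π(E,F)| M_F(x)` for every `x ∈ E`, and also `D_A ≥ 0`. Since each
nonzero vector has `q^(m-1)` orthogonal vectors, `∑_x D_A(x) = (q-1) |A| q^m` over all of `K^m`
(`sum_defect`).

It remains to see that `∑_{x ∈ E} D_F(x) ≤ 2 |F| q^d`, with `d = n + 1`. Points of `E` with nonzero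
last coordinate are the only points of `P` on their punctured lines through the origin; as `D_F` is
constant on these lines, they contribute at most `(q-1)⁻¹ ∑_{K^d} D_F = |F| q^d`. Points with last
coordinate zero satisfy `x·y = x'·y'` for the projections to `K^n`, which are injective on `P`, so
they contribute at most `∑_{K^n} D_{F'} ≤ |F| q^(n+1)`. Consequently
`q |E| |F|² ≤ |Π| (|E| |F|² + 2 |F| q^d) ≤ 2 |Π| |E| |F|²` once `|E| |F| ≥ 2 q^d`.
-/

open Finset

noncomputable section

/-- the paraboloid P ⊆ F_q^{n+1} : x₁² + ⋯ + x_n² = x_{n+1} -/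
def parab {K : Type} [Field K] [Fintype K] [DecidableEq K] (n : ℕ) :
    Finset (Fin (n + 1) → K) :=
  univ.filter fun x => ∑ i : Fin n, (x i.castSucc) ^ 2 = x (Fin.last n)

/-- projection onto the first n coordinates -/
def projFirst {K : Type} (n : ℕ) (x : Fin (n + 1) → K) : Fin n → K :=
  fun i => x i.castSucc

/-- Number of pairs of points of `A` having the same dot product with `x`, as a real number. -/
def coll {K : Type} [Field K] [DecidableEq K] {m : ℕ} (A : Finset (Fin m → K))
    (x : Fin m → K) : ℝ :=
  ∑ y ∈ A, ∑ z ∈ A, if fqDot x y = fqDot x z then 1 else 0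

/-- `q` times the excess of `coll A x` over its expected value `|A|² / q`. -/
def defect {K : Type} [Field K] [Fintype K] [DecidableEq K] {m : ℕ} (A : Finset (Fin m → K))
    (x : Fin m → K) : ℝ :=
  (Fintype.card K : ℝ) * coll A x - (A.card : ℝ) ^ 2

/-- Cauchy–Schwarz over the values `t ∈ T` of `y ↦ x·y` on `A`. -/
lemma card_sq_le_coll {K : Type} [Field K] [DecidableEq K] {m : ℕ} (A : Finset (Fin m → K))
    (x : Fin m → K) (T : Finset K) (hT : ∀ y ∈ A, fqDot x y ∈ T) :
    (A.card : ℝ) ^ 2 ≤ (T.card : ℝ) * coll A x := by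
  have h1 : (A.card : ℝ) = ∑ t ∈ T, ∑ y ∈ A, if fqDot x y = t then (1 : ℝ) else 0 := by
    rw [Finset.sum_comm, Finset.card_eq_sum_ones]
    push_cast
    refine Finset.sum_congr rfl fun y hy => ?_
    simp [hT y hy]
  have h2 : coll A x = ∑ t ∈ T, (∑ y ∈ A, if fqDot x y = t then (1 : ℝ) else 0) ^ 2 := by
    simp only [sq, Finset.sum_mul_sum]
    rw [Finset.sum_comm, coll]
    refine Finset.sum_congr rfl fun y hy => ?_
    rw [Finset.sum_comm]
    refine Finset.sum_congr rfl fun z _ => ?_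
    simp only [ite_mul, one_mul, zero_mul]
    rw [Finset.sum_ite_eq, if_pos (hT y hy)]
    simp only [eq_comm]
  rw [h1, h2]
  exact sq_sum_le_card_mul_sum_sq

lemma defect_nonneg {K : Type} [Field K] [Fintype K] [DecidableEq K] {m : ℕ}
    (A : Finset (Fin m → K)) (x : Fin m → K) : 0 ≤ defect A x :=
  sub_nonneg.2 (card_sq_le_coll A x univ fun _ _ => mem_univ _)

/-- A nonzero vector of `K^m` has `q^(m-1)` orthogonal vectors: all fibres of the surjective
functional `x ↦ x·w` are equally large. -/
lemma card_mul_card_orthogonal {K : Type} [Field K] [Fintype K] [DecidableEq K] {m : ℕ}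
    (w : Fin m → K) (hw : w ≠ 0) :
    Fintype.card K * (univ.filter fun x : Fin m → K => fqDot x w = 0).card
      = Fintype.card K ^ m := by
  obtain ⟨i, hi⟩ := Function.ne_iff.1 hw
  have hi : w i ≠ 0 := hi
  have hfib : ∀ t ∈ (univ : Finset K),
      (univ.filter fun x : Fin m → K => fqDot x w = t).card
        = (univ.filter fun x : Fin m → K => fqDot x w = 0).card := by
    intro t _
    have hv : fqDot (Pi.single i (t / w i)) w = t := by
      simp [fqDot, Pi.single_apply, hi]
    refine Finset.card_bij' (fun x _ => x - Pi.single i (t / w i))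
      (fun x _ => x + Pi.single i (t / w i)) ?_ ?_ ?_ ?_
    · intro x hx
      simp only [mem_filter, mem_univ, true_and] at hx ⊢
      rw [← sub_self t]
      nth_rewrite 3 [← hv]
      rw [← hx]
      simp [fqDot, sub_mul]
    · intro x hx
      simp only [mem_filter, mem_univ, true_and] at hx ⊢
      have : fqDot (x + Pi.single i (t / w i)) w
          = fqDot x w + fqDot (Pi.single i (t / w i)) w := by
        simp [fqDot, add_mul, Finset.sum_add_distrib]
      rw [this, hx, hv, zero_add]
    · intro x _; simp
    · intro x _; simp
  have h := Finset.card_eq_sum_card_fiberwise (s := (univ : Finset (Fin m → K)))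
    (t := (univ : Finset K)) (f := fun x => fqDot x w) (fun _ _ => by simp)
  rw [Finset.sum_congr rfl hfib] at h
  simpa using h.symm

lemma sum_defect {K : Type} [Field K] [Fintype K] [DecidableEq K] {m : ℕ}
    (A : Finset (Fin m → K)) :
    ∑ x, defect A x
      = ((Fintype.card K : ℝ) - 1) * ((A.card : ℝ) * (Fintype.card K : ℝ) ^ m) := by
  set q : ℝ := (Fintype.card K : ℝ) with hq
  have hpair : ∀ y z : Fin m → K,
      q * ∑ x : Fin m → K, (if fqDot x y = fqDot x z then (1 : ℝ) else 0)
        = q ^ m + if y = z then (q - 1) * q ^ m else 0 := by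
    intro y z
    by_cases hyz : y = z
    · subst hyz
      simp only [if_true, Finset.sum_const, nsmul_eq_mul, mul_one, Finset.card_univ,
        Fintype.card_fun, Fintype.card_fin, Nat.cast_pow, ← hq]
      ring
    · have h := card_mul_card_orthogonal (y - z) (sub_ne_zero.2 hyz)
      have h' : (univ.filter fun x : Fin m → K => fqDot x (y - z) = 0)
          = univ.filter fun x : Fin m → K => fqDot x y = fqDot x z := by
        refine Finset.filter_congr fun x _ => ?_
        simp [fqDot, mul_sub, sub_eq_zero]
      rw [h'] at h
      rw [Finset.sum_boole, if_neg hyz, add_zero, hq]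
      exact_mod_cast h
  have hsum : q * ∑ x, coll A x = ∑ y ∈ A, ∑ z ∈ A,
      q * ∑ x : Fin m → K, (if fqDot x y = fqDot x z then (1 : ℝ) else 0) := by
    simp only [coll, ← Finset.mul_sum]
    congr 1
    rw [Finset.sum_comm]
    exact Finset.sum_congr rfl fun y _ => Finset.sum_comm
  have hcard : ((Fintype.card (Fin m → K) : ℕ) : ℝ) = q ^ m := by simp [hq]
  have hval : q * ∑ x, coll A x
      = (A.card : ℝ) ^ 2 * q ^ m + (A.card : ℝ) * ((q - 1) * q ^ m) := by
    rw [hsum]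
    simp only [hpair, Finset.sum_add_distrib, Finset.sum_const, nsmul_eq_mul]
    congr 1
    · ring
    · rw [← nsmul_eq_mul, ← Finset.sum_const]
      exact Finset.sum_congr rfl fun y hy => by rw [Finset.sum_ite_eq, if_pos hy]
  simp only [defect, Finset.sum_sub_distrib, ← Finset.mul_sum, Finset.sum_const, nsmul_eq_mul,
    Finset.card_univ, hcard, ← hq]
  rw [hval]
  ring

lemma defect_smul {K : Type} [Field K] [Fintype K] [DecidableEq K] {m : ℕ}
    (A : Finset (Fin m → K)) (x : Fin m → K) (s : K) (hs : s ≠ 0) :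
    defect A (s • x) = defect A x := by
  have h : ∀ y, fqDot (s • x) y = s * fqDot x y := fun y => by
    simp [fqDot, Finset.mul_sum, mul_assoc]
  simp [defect, coll, h, hs]

lemma mem_parab {K : Type} [Field K] [Fintype K] [DecidableEq K] {n : ℕ} {x : Fin (n + 1) → K} :
    x ∈ parab n ↔ ∑ i : Fin n, (x i.castSucc) ^ 2 = x (Fin.last n) := by
  simp [parab]

lemma projFirst_injOn {K : Type} [Field K] [Fintype K] [DecidableEq K] {n : ℕ} :
    Set.InjOn (projFirst (K := K) n) (parab n : Finset (Fin (n + 1) → K)) := by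
  intro x hx y hy hxy
  have h : ∀ i : Fin n, x i.castSucc = y i.castSucc := fun i => congrFun hxy i
  funext j
  refine Fin.lastCases ?_ (fun i => h i) j
  rw [← mem_parab.1 (Finset.mem_coe.1 hx), ← mem_parab.1 (Finset.mem_coe.1 hy)]
  simp [h]

/-- Off the hyperplane `x_d = 0`, each punctured line through the origin meets the paraboloid in at
most one point, so the dilates of `E` by nonzero scalars are disjoint. -/
lemma sum_defect_last_ne {K : Type} [Field K] [Fintype K] [DecidableEq K] {n : ℕ}
    (E F : Finset (Fin (n + 1) → K)) (hE : E ⊆ parab n) (h0 : ∀ x ∈ E, x (Fin.last n) ≠ 0) :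
    ∑ x ∈ E, defect F x ≤ (F.card : ℝ) * (Fintype.card K : ℝ) ^ (n + 1) := by
  have hq : (1 : ℝ) < Fintype.card K := by exact_mod_cast Fintype.one_lt_card
  have hinj : Set.InjOn (fun p : K × (Fin (n + 1) → K) => p.1 • p.2)
      ((univ.erase (0 : K) ×ˢ E : Finset _) : Set (K × (Fin (n + 1) → K))) := by
    rintro ⟨s, x⟩ hx ⟨t, y⟩ hy hxy
    simp only [coe_product, Set.mem_prod, mem_coe, mem_erase, mem_univ, and_true] at hx hy hxy
    have hc : ∀ j, s * x j = t * y j := fun j => congrFun hxy j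
    have hsq : s ^ 2 * x (Fin.last n) = t ^ 2 * y (Fin.last n) := by
      rw [← mem_parab.1 (hE hx.2), ← mem_parab.1 (hE hy.2), Finset.mul_sum, Finset.mul_sum]
      refine Finset.sum_congr rfl fun i _ => ?_
      rw [← mul_pow, ← mul_pow, hc]
    have hst : s = t := by
      have h1 : (s - t) * (s * x (Fin.last n)) = 0 := by
        linear_combination hsq - t * hc (Fin.last n)
      rcases mul_eq_zero.1 h1 with h | h
      · exact sub_eq_zero.1 h
      · exact absurd h (mul_ne_zero hx.1 (h0 x hx.2))
    subst hst
    exact Prod.ext rfl (funext fun j => mul_left_cancel₀ hx.1 (hc j))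
  have hle : ∑ p ∈ univ.erase (0 : K) ×ˢ E, defect F (p.1 • p.2) ≤ ∑ x, defect F x := by
    rw [← Finset.sum_image (f := defect F) hinj]
    exact Finset.sum_le_univ_sum_of_nonneg (defect_nonneg F)
  have heq : ∑ p ∈ univ.erase (0 : K) ×ˢ E, defect F (p.1 • p.2)
      = ((Fintype.card K : ℝ) - 1) * ∑ x ∈ E, defect F x := by
    rw [Finset.sum_product]
    have : ∀ s ∈ univ.erase (0 : K), ∑ x ∈ E, defect F (s • x) = ∑ x ∈ E, defect F x :=
      fun s hs => Finset.sum_congr rfl fun x _ => defect_smul F x s (Finset.ne_of_mem_erase hs)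
    rw [Finset.sum_congr rfl this, Finset.sum_const, nsmul_eq_mul,
      Finset.card_erase_of_mem (mem_univ _), Finset.card_univ, Nat.cast_sub Fintype.card_pos,
      Nat.cast_one]
  rw [heq, sum_defect] at hle
  exact le_of_mul_le_mul_left hle (by linarith)

/-- On the hyperplane `x_d = 0` the dot product only sees the first `n` coordinates, and the bound
comes from the moment identity in `K^n`. -/
lemma sum_defect_last_eq {K : Type} [Field K] [Fintype K] [DecidableEq K] {n : ℕ}
    (E F : Finset (Fin (n + 1) → K)) (hE : E ⊆ parab n) (hF : F ⊆ parab n)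
    (h0 : ∀ x ∈ E, x (Fin.last n) = 0) :
    ∑ x ∈ E, defect F x ≤ (F.card : ℝ) * (Fintype.card K : ℝ) ^ (n + 1) := by
  have hFi : Set.InjOn (projFirst (K := K) n) F := projFirst_injOn.mono (by exact_mod_cast hF)
  have hEi : Set.InjOn (projFirst (K := K) n) E := projFirst_injOn.mono (by exact_mod_cast hE)
  have hD : ∀ x ∈ E, defect F x = defect (F.image (projFirst n)) (projFirst n x) := by
    intro x hx
    have h : ∀ y, fqDot x y = fqDot (projFirst n x) (projFirst n y) := fun y => by
      simp [fqDot, projFirst, Fin.sum_univ_castSucc, h0 x hx]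
    simp only [defect, coll, Finset.card_image_of_injOn hFi, Finset.sum_image hFi, h]
  rw [Finset.sum_congr rfl hD, ← Finset.sum_image (f := defect (F.image (projFirst n))) hEi]
  refine (Finset.sum_le_univ_sum_of_nonneg (defect_nonneg _)).trans ?_
  rw [sum_defect, Finset.card_image_of_injOn hFi]
  have : 0 ≤ (F.card : ℝ) * (Fintype.card K : ℝ) ^ n := by positivity
  rw [pow_succ]
  linarith

/-- d = n+1 ≥ 3: if E, F ⊆ P and |E||F| ≥ C q^d, then |Π(E,F)| ≥ cq. -/
theorem dotSet_card_parab (n : ℕ) (hd : 3 ≤ n + 1) :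
    ∃ C : ℝ, 1 < C ∧ ∃ c : ℝ, 0 < c ∧ c < 1 ∧
      ∀ (K : Type) [Field K] [Fintype K] [DecidableEq K],
        Odd (Fintype.card K) →
        ∀ E F : Finset (Fin (n + 1) → K), E ⊆ parab n → F ⊆ parab n →
          ((E.card : ℝ) * (F.card : ℝ) ≥ C * (Fintype.card K : ℝ) ^ (n + 1)) →
          ((dotSet E F).card : ℝ) ≥ c * (Fintype.card K : ℝ) := by
  refine ⟨2, by norm_num, 1 / 2, by norm_num, by norm_num, ?_⟩
  intro K _ _ _ _ E F hE hF hEF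
  have hq : (0 : ℝ) < Fintype.card K := by exact_mod_cast Fintype.card_pos
  set q : ℝ := (Fintype.card K : ℝ) with hqdef
  have hdef : ∑ x ∈ E, defect F x ≤ 2 * ((F.card : ℝ) * q ^ (n + 1)) := by
    rw [← Finset.sum_filter_add_sum_filter_not E (fun x => x (Fin.last n) = 0)]
    have h1 := sum_defect_last_eq (E.filter fun x => x (Fin.last n) = 0) F
      ((filter_subset _ _).trans hE) hF fun x hx => (mem_filter.1 hx).2
    have h2 := sum_defect_last_ne (E.filter fun x => ¬ x (Fin.last n) = 0) F
      ((filter_subset _ _).trans hE) fun x hx => (mem_filter.1 hx).2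
    linarith
  have hcs : (E.card : ℝ) * (F.card : ℝ) ^ 2 ≤ ((dotSet E F).card : ℝ) * ∑ x ∈ E, coll F x := by
    rw [← nsmul_eq_mul, ← Finset.sum_const, Finset.mul_sum]
    refine Finset.sum_le_sum fun x hx => card_sq_le_coll F x _ fun y hy => ?_
    exact mem_image.2 ⟨(x, y), mem_product.2 ⟨hx, hy⟩, rfl⟩
  have hsum : ∑ x ∈ E, defect F x
      = q * ∑ x ∈ E, coll F x - (E.card : ℝ) * (F.card : ℝ) ^ 2 := by
    simp only [defect, Finset.sum_sub_distrib, ← Finset.mul_sum, Finset.sum_const, nsmul_eq_mul,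
      ← hqdef]
  have hpos : 0 < (E.card : ℝ) * (F.card : ℝ) := lt_of_lt_of_le (by positivity) hEF
  have hFpos : 0 < (F.card : ℝ) := pos_of_mul_pos_right hpos (Nat.cast_nonneg _)
  have hcoll : q * ∑ x ∈ E, coll F x ≤ 2 * ((E.card : ℝ) * (F.card : ℝ) ^ 2) := by
    have := mul_le_mul_of_nonneg_left hEF hFpos.le
    nlinarith
  have hN : 0 < (E.card : ℝ) * (F.card : ℝ) ^ 2 := by
    rw [sq, ← mul_assoc]
    exact mul_pos hpos hFpos
  have hfin : ((E.card : ℝ) * (F.card : ℝ) ^ 2) * q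
      ≤ ((E.card : ℝ) * (F.card : ℝ) ^ 2) * (2 * ((dotSet E F).card : ℝ)) := by
    have h1 := mul_le_mul_of_nonneg_left hcs hq.le
    have h2 := mul_le_mul_of_nonneg_left hcoll (Nat.cast_nonneg (α := ℝ) (dotSet E F).card)
    linarith
  have := le_of_mul_le_mul_left hfin hN
  linarith
end
end

section
/- Let d ≥ 2 and a ∈ F_q^d with a₁² + ⋯ + a_{d−1}² ≠ −a_d. Then for every x ∈ F_q^d \ {0}, the translated paraboloid P + a intersects the punctured line l_x in at most 2 points: |(P + a) ∩ l_x| ≤ 2. -/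
/-!
A point `s • x` of the line lies on `P + a` exactly when
`∑ (s xᵢ - aᵢ)² = s x_d - a_d`, a polynomial equation in `s` of degree at most two whose constant
term is `∑ aᵢ² + a_d`. The hypothesis on `a` says that this constant term is nonzero, so the
polynomial is not identically zero and has at most two roots
(`card_quadratic_roots_le_two`).
-/

open Finset

noncomputable section

/-- A quadratic with nonzero constant term is not the zero polynomial, so it has at most two
roots, whether or not its higher coefficients vanish. -/
lemma card_quadratic_roots_le_two {K : Type} [Field K] [Fintype K] [DecidableEq K]
    (A B C : K) (hC : C ≠ 0) :
    (univ.filter fun s : K => A * s ^ 2 + B * s + C = 0).card ≤ 2 := by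
  have hp : Polynomial.C A * Polynomial.X ^ 2 + Polynomial.C B * Polynomial.X
      + Polynomial.C C ≠ 0 := by
    intro h
    apply hC
    simpa using congrArg (Polynomial.eval 0) h
  refine (Polynomial.card_le_degree_of_subset_roots (Z := univ.filter fun s : K =>
    A * s ^ 2 + B * s + C = 0) ?_).trans
    (Polynomial.natDegree_quadratic_le (a := A) (b := B) (c := C))
  intro s hs
  rw [Polynomial.mem_roots hp]
  simpa using hs

/-- d = n+1 ≥ 2: a suitably translated paraboloid meets each punctured
line through the origin in at most 2 points. -/
theorem translated_parab_inter_line_le_two (n : ℕ) (hd : 2 ≤ n + 1)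
    (K : Type) [Field K] [Fintype K] [DecidableEq K]
    (hq : Odd (Fintype.card K))
    (a : Fin (n + 1) → K)
    (ha : ∑ i : Fin n, (a i.castSucc) ^ 2 ≠ -(a (Fin.last n)))
    (x : Fin (n + 1) → K) (hx : x ≠ 0) :
    (((parab n).image (· + a)) ∩ lineThrough x).card ≤ 2 := by
  -- the three coefficients come from expanding `∑ (s xᵢ - aᵢ)² = s x_d - a_d` in `s`
  have hroots := card_quadratic_roots_le_two (∑ i : Fin n, (x i.castSucc) ^ 2)
    (-(2 * ∑ i : Fin n, x i.castSucc * a i.castSucc) - x (Fin.last n))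
    (∑ i : Fin n, (a i.castSucc) ^ 2 + a (Fin.last n))
    (fun h => ha (eq_neg_of_add_eq_zero_left h))
  refine le_trans (card_le_card ?_) ((card_image_le (f := fun s : K => s • x)).trans hroots)
  intro y hy
  simp only [parab, lineThrough, mem_inter, mem_image, mem_filter, mem_univ, true_and] at hy
  obtain ⟨⟨p, hp, hpy⟩, s, -, hs⟩ := hy
  refine mem_image.mpr ⟨s, ?_, hs.symm⟩
  have hcoord : ∀ j, p j = s * x j - a j := by
    intro j
    have h := congrFun (hpy.trans hs) j
    simp only [Pi.add_apply, Pi.smul_apply, smul_eq_mul] at h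
    exact eq_sub_of_add_eq h
  have hexpand : ∑ i : Fin n, (s * x i.castSucc - a i.castSucc) ^ 2
      = (∑ i : Fin n, (x i.castSucc) ^ 2) * s ^ 2
        - 2 * (∑ i : Fin n, x i.castSucc * a i.castSucc) * s
        + ∑ i : Fin n, (a i.castSucc) ^ 2 := by
    simp only [sum_mul, mul_sum, ← sum_sub_distrib, ← sum_add_distrib]
    exact sum_congr rfl fun i _ => by ring
  simp only [hcoord] at hp
  rw [hexpand] at hp
  simp only [mem_filter, mem_univ, true_and]
  linear_combination hp
end
end
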